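/- For every integer n ≥ 1, the number of weakly increasing parking functions of length n (i.e., parking functions (x_1,…,x_n) with x_1 ≤ x_2 ≤ … ≤ x_n) equals the n-th Catalan number Cat_n = (1/(n+1))·binomial(2n, n). -/

import Mathlib

/-- A sequence `x : Fin n → Fin n` (so with values in `{0,…,n-1}`) is a *parking function*
of length `n` if its weakly increasing rearrangement `z = x ∘ σ` satisfies `z i ≤ i`
(0-indexed; equivalently `z_i ≤ i - 1` in 1-indexed notation). -/
def IsParkingFunction {n : ℕ} (x : Fin n → Fin n) : Prop :=
  ∃ σ : Equiv.Perm (Fin n), Monotone (x ∘ σ) ∧ ∀ i : Fin n, (x (σ i) : ℕ) ≤ (i : ℕ)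

def pfS (n k : ℕ) : Set (Fin n → ℕ) :=
  {x | Monotone x ∧ ∀ i, x i ≤ (i : ℕ) ∧ x i ≤ k}

lemma pfS_finite (n k : ℕ) : (pfS n k).Finite :=
  (Set.finite_Iic (fun _ : Fin n => k)).subset fun _ hx i => (hx.2 i).2

lemma pfS_zero_right (n : ℕ) : (pfS n 0).ncard = 1 := by
  rw [Set.ncard_eq_one]
  refine ⟨fun _ => 0, ?_⟩
  ext x
  simp only [pfS, Set.mem_ofPred_eq, Set.mem_singleton_iff]
  constructor
  · intro h
    funext i
    have := (h.2 i).2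
    omega
  · rintro rfl
    exact ⟨monotone_const, by simp⟩

lemma pfS_step (n k : ℕ) (h : k + 1 ≤ n) :
    pfS (n + 1) (k + 1) =
      pfS (n + 1) k ∪ (fun x : Fin n → ℕ => (Fin.snoc x (k + 1) : Fin (n + 1) → ℕ)) '' pfS n (k + 1) := by
  ext x
  simp only [pfS, Set.mem_ofPred_eq, Set.mem_union, Set.mem_image]
  constructor
  · rintro ⟨hm, hx⟩
    by_cases hl : x (Fin.last n) ≤ k
    · left
      exact ⟨hm, fun i => ⟨(hx i).1, (hm (Fin.le_last i)).trans hl⟩⟩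
    · right
      have hl' : x (Fin.last n) = k + 1 := by
        have := (hx (Fin.last n)).2
        omega
      refine ⟨Fin.init x, ⟨?_, ?_⟩, ?_⟩
      · intro i j hij
        exact hm (Fin.castSucc_le_castSucc_iff.2 hij)
      · intro i
        exact hx i.castSucc
      · rw [← hl']
        exact Fin.snoc_init_self x
  · rintro (⟨hm, hx⟩ | ⟨y, ⟨hm, hy⟩, rfl⟩)
    · exact ⟨hm, fun i => ⟨(hx i).1, (hx i).2.trans (Nat.le_succ k)⟩⟩
    · refine ⟨?_, ?_⟩
      · intro i j hij
        induction j using Fin.lastCases with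
        | last =>
          induction i using Fin.lastCases with
          | last => simp
          | cast i => simpa using (hy i).2
        | cast j =>
          induction i using Fin.lastCases with
          | last => exact absurd hij (not_le.2 (Fin.castSucc_lt_last j))
          | cast i => simpa using hm (Fin.castSucc_le_castSucc_iff.1 hij)
      · intro i
        induction i using Fin.lastCases with
        | last => simpa using h
        | cast i => simpa using hy i

lemma pfS_card_step (n k : ℕ) (h : k + 1 ≤ n) :
    (pfS (n + 1) (k + 1)).ncard = (pfS (n + 1) k).ncard + (pfS n (k + 1)).ncard := by
  rw [pfS_step n k h, Set.ncard_union_eq _ (pfS_finite _ _) ((pfS_finite _ _).image _),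
    Set.ncard_image_of_injective]
  · intro x y hxy
    have := congrArg Fin.init hxy
    simpa using this
  · rw [Set.disjoint_left]
    rintro _ hx ⟨y, _, rfl⟩
    have := (hx.2 (Fin.last n)).2
    simp at this

lemma pfS_diag (n : ℕ) : pfS (n + 1) (n + 1) = pfS (n + 1) n := by
  ext x
  simp only [pfS, Set.mem_ofPred_eq]
  refine and_congr_right fun _ => forall_congr' fun i => ?_
  have := i.2
  omega

def pfG (n : ℕ) : ℕ → ℤ
  | 0 => 1
  | k + 1 => ((n + k + 1).choose (k + 1) : ℤ) - ((n + k + 1).choose k : ℤ)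

lemma pfG_step (n k : ℕ) : pfG (n + 1) (k + 1) = pfG (n + 1) k + pfG n (k + 1) := by
  cases k with
  | zero => simp [pfG, add_comm]
  | succ k =>
    simp only [pfG]
    have e1 : n + 1 + (k + 1) + 1 = (n + k + 2) + 1 := by ring
    have e2 : n + 1 + k + 1 = n + k + 2 := by ring
    have e3 : n + (k + 1) + 1 = n + k + 2 := by ring
    rw [e1, e2, e3, Nat.choose_succ_succ' (n + k + 2) (k + 1), Nat.choose_succ_succ' (n + k + 2) k]
    push_cast
    ring

lemma pfG_diag (n : ℕ) : pfG n (n + 1) = 0 := by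
  simp only [pfG]
  rw [sub_eq_zero, Nat.cast_inj]
  exact Nat.choose_symm_of_eq_add (by ring)

lemma pfS_card (n : ℕ) : ∀ k ≤ n, ((pfS n k).ncard : ℤ) = pfG n k := by
  induction n with
  | zero =>
    intro k hk
    obtain rfl : k = 0 := by omega
    simp [pfS_zero_right, pfG]
  | succ n ih =>
    intro k
    induction k with
    | zero => simp [pfS_zero_right, pfG]
    | succ k ihk =>
      intro hk
      rw [pfG_step]
      rcases Nat.lt_or_ge k n with h | h
      · rw [pfS_card_step n k h]
        push_cast
        rw [ihk (by omega), ih _ h]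
      · obtain rfl : k = n := by omega
        rw [pfS_diag, pfG_diag, ihk (by omega), add_zero]

lemma pf_iff {n : ℕ} (x : Fin n → Fin n) :
    (IsParkingFunction x ∧ Monotone x) ↔ (Monotone x ∧ ∀ i, (x i : ℕ) ≤ i) := by
  constructor
  · rintro ⟨⟨σ, hσ, h⟩, hm⟩
    refine ⟨hm, fun i => ?_⟩
    have e : x ∘ σ = x ∘ (1 : Equiv.Perm (Fin n)) := Tuple.unique_monotone hσ (by simpa using hm)
    have := h i
    have e' := congrFun e i
    simp at e'
    rwa [e'] at this
  · rintro ⟨hm, h⟩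
    exact ⟨⟨1, by simpa using hm, by simpa using h⟩, hm⟩

lemma pf_card (n : ℕ) :
    Nat.card {x : Fin n → Fin n // IsParkingFunction x ∧ Monotone x} = (pfS n n).ncard := by
  rw [← Nat.card_coe_set_eq]
  refine Nat.card_congr
    { toFun := fun x => ⟨fun i => x.1 i, ?_, ?_⟩
      invFun := fun y => ⟨fun i => ⟨y.1 i, lt_of_le_of_lt (y.2.2 i).1 i.2⟩, ?_⟩
      left_inv := fun x => rfl
      right_inv := fun y => rfl }
  · intro i j hij
    exact ((pf_iff _).1 x.2).1 hij
  · intro i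
    exact ⟨((pf_iff _).1 x.2).2 i, (x.1 i).2.le⟩
  · rw [pf_iff]
    exact ⟨fun i j hij => y.2.1 hij, fun i => (y.2.2 i).1⟩

/-- For every `n ≥ 1`, the number of weakly increasing parking functions of length `n`
equals the `n`-th Catalan number `(1/(n+1)) * (2n choose n)`. -/
theorem card_monotone_parkingFunctions (n : ℕ) (hn : 1 ≤ n) :
    (Nat.card {x : Fin n → Fin n // IsParkingFunction x ∧ Monotone x} : ℚ) =
      (Nat.choose (2 * n) n : ℚ) / ((n : ℚ) + 1) := by
  rw [pf_card]
  have h := pfS_card n n le_rfl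
  obtain ⟨m, rfl⟩ : ∃ m, n = m + 1 := ⟨n - 1, by omega⟩
  simp only [pfG] at h
  have e : m + 1 + m + 1 = 2 * (m + 1) := by ring
  rw [e] at h
  have h2 := Nat.choose_succ_right_eq (2 * (m + 1)) m
  rw [show 2 * (m + 1) - m = m + 2 by omega] at h2
  have h' : ((pfS (m + 1) (m + 1)).ncard : ℚ) =
      ((2 * (m + 1)).choose (m + 1) : ℚ) - ((2 * (m + 1)).choose m : ℚ) := by exact_mod_cast h
  have h2' : ((2 * (m + 1)).choose (m + 1) : ℚ) * (m + 1) = ((2 * (m + 1)).choose m : ℚ) * (m + 2) := by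
    exact_mod_cast h2
  rw [h', eq_div_iff (by positivity)]
  push_cast
  linear_combination h2'
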